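/- The Barnes G-function satisfies G(1/3)/G(2/3) = (2π)^{1/3} / (3^{1/6} · Γ(1/3)) · exp( (2π² − 3·ψ⁽¹⁾(1/3)) / (18π√3) ), where ψ⁽¹⁾ is the trigamma function. -/

import Mathlib

open Real MeasureTheory Filter

/-- Hurwitz zeta function ζ(s, a) for real a > 0, via analytic continuation. -/
noncomputable def hurwitzZetaReal (s : ℂ) (a : ℝ) : ℂ :=
  HurwitzZeta.hurwitzZeta (a : UnitAddCircle) s -
    ∑ k ∈ Finset.range (⌈a⌉₊ - 1), ((a - (⌈a⌉₊ - 1) + k : ℝ) : ℂ) ^ (-s)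

/-- ζ'(-1, a): derivative of the Hurwitz zeta function w.r.t. s at s = -1. -/
noncomputable def hurwitzZetaDerivNegOne (a : ℝ) : ℂ :=
  deriv (fun s => hurwitzZetaReal s a) (-1)

/-- Logarithm of the Glaisher–Kinkelin constant: log A = 1/12 - ζ'(-1). -/
noncomputable def logA : ℂ := 1 / 12 - deriv riemannZeta (-1)

/-- log G(z+1) for z > 0, via log G(z+1) = z log Γ(z) + ζ'(-1) - ζ'(-1, z). -/
noncomputable def logBarnesG1p (z : ℝ) : ℂ :=
  z * Real.log (Real.Gamma z) + deriv riemannZeta (-1) - hurwitzZetaDerivNegOne z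

/-- log G(x) for x > 0, via the recurrence G(z+1) = Γ(z) G(z) on (0, 1]. -/
noncomputable def logBarnesG (x : ℝ) : ℂ :=
  if x ≤ 1 then logBarnesG1p x - Real.log (Real.Gamma x) else logBarnesG1p (x - 1)

/-- The Barnes G-function (for positive real argument). -/
noncomputable def barnesG (x : ℝ) : ℂ := Complex.exp (logBarnesG x)

/-- The digamma function ψ = (log Γ)'. -/
noncomputable def digamma (x : ℝ) : ℝ := deriv (fun t => Real.log (Real.Gamma t)) x

/-- The trigamma function ψ⁽¹⁾ = (log Γ)''. -/
noncomputable def trigamma (x : ℝ) : ℝ :=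
  deriv (deriv (fun t => Real.log (Real.Gamma t))) x

/-- The Clausen function Cl₂(x) = ∑_{k ≥ 1} sin(k x) / k². -/
noncomputable def clausen2 (x : ℝ) : ℝ := ∑' k : ℕ, Real.sin ((k + 1) * x) / (k + 1) ^ 2

/-- Catalan's constant. -/
noncomputable def catalanConst : ℝ := ∑' k : ℕ, (-1 : ℝ) ^ k / (2 * (k : ℝ) + 1) ^ 2

theorem aux_trigamma_hasSum :
    HasSum (fun n : ℕ => 1 / ((n : ℝ) + 1 / 3) ^ 2) (trigamma (1 / 3)) := by
  set f : ℕ → ℝ → ℝ := fun n x =>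
    x * (Real.log (n + 2) - Real.log (n + 1)) + Real.log (n + 1) - Real.log (x + n + 1) with hf
  set f' : ℕ → ℝ → ℝ := fun n x =>
    (Real.log (n + 2) - Real.log (n + 1)) - (x + n + 1)⁻¹ with hf'
  set f'' : ℕ → ℝ → ℝ := fun n x => ((x + n + 1) ^ 2)⁻¹ with hf''
  have hs : Summable (fun n : ℕ => (((n : ℝ) + 1) ^ 2)⁻¹) := by
    have := (summable_nat_add_iff 1).2 (Real.summable_nat_pow_inv (p := 2).2 (by norm_num))
    simpa using this
  have hs2 : Summable (fun n : ℕ => 2 * (((n : ℝ) + 1) ^ 2)⁻¹) := hs.mul_left 2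
  have hpos : ∀ (n : ℕ) (y : ℝ), y ∈ Set.Ioo (0 : ℝ) 2 → 0 < y + n + 1 := by
    intro n y hy
    have := hy.1
    positivity
  have hd1 : ∀ (n : ℕ) (y : ℝ), y ∈ Set.Ioo (0 : ℝ) 2 → HasDerivAt (f n) (f' n y) y := by
    intro n y hy
    have h1 : HasDerivAt (fun x : ℝ => x + n + 1) 1 y :=
      ((hasDerivAt_id y).add_const _).add_const _
    have h2 := h1.log (hpos n y hy).ne'
    have h3 := (((hasDerivAt_id y).mul_const
      (Real.log (n + 2) - Real.log (n + 1))).add_const (Real.log (n + 1))).sub h2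
    refine h3.congr_deriv ?_
    simp [hf']
  have hd2 : ∀ (n : ℕ) (y : ℝ), y ∈ Set.Ioo (0 : ℝ) 2 → HasDerivAt (f' n) (f'' n y) y := by
    intro n y hy
    have h1 : HasDerivAt (fun x : ℝ => x + n + 1) 1 y :=
      ((hasDerivAt_id y).add_const _).add_const _
    have h2 := (h1.fun_inv (hpos n y hy).ne').const_sub (Real.log (n + 2) - Real.log (n + 1))
    refine h2.congr_deriv ?_
    simp only [hf'']
    ring
  have hb1 : ∀ (n : ℕ) (y : ℝ), y ∈ Set.Ioo (0 : ℝ) 2 → ‖f' n y‖ ≤ 2 * (((n : ℝ) + 1) ^ 2)⁻¹ := by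
    intro n y hy
    have hn : (0 : ℝ) ≤ n := n.cast_nonneg
    have e : Real.log (n + 2) - Real.log (n + 1) = Real.log (((n : ℝ) + 2) / (n + 1)) := by
      rw [Real.log_div] <;> positivity
    have u : Real.log (((n : ℝ) + 2) / (n + 1)) ≤ ((n : ℝ) + 1)⁻¹ := by
      have := Real.log_le_sub_one_of_pos (x := ((n : ℝ) + 2) / (n + 1)) (by positivity)
      have e2 : ((n : ℝ) + 2) / (n + 1) - 1 = ((n : ℝ) + 1)⁻¹ := by field_simp; ring
      linarith
    have l : ((n : ℝ) + 3)⁻¹ ≤ Real.log (((n : ℝ) + 2) / (n + 1)) := by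
      have := Real.one_sub_inv_le_log_of_pos (x := ((n : ℝ) + 2) / (n + 1)) (by positivity)
      have e2 : 1 - (((n : ℝ) + 2) / (n + 1))⁻¹ = ((n : ℝ) + 2)⁻¹ := by field_simp; ring
      have e3 : ((n : ℝ) + 3)⁻¹ ≤ ((n : ℝ) + 2)⁻¹ := by gcongr; norm_num
      linarith
    have u' : (y + n + 1)⁻¹ ≤ ((n : ℝ) + 1)⁻¹ := by
      have := hy.1
      gcongr; linarith
    have l' : ((n : ℝ) + 3)⁻¹ ≤ (y + n + 1)⁻¹ := by
      have := hy.2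
      have := hpos n y hy
      exact inv_anti₀ this (by linarith)
    have k : ((n : ℝ) + 1)⁻¹ - ((n : ℝ) + 3)⁻¹ ≤ 2 * (((n : ℝ) + 1) ^ 2)⁻¹ := by
      have : ((n : ℝ) + 1)⁻¹ - ((n : ℝ) + 3)⁻¹ = 2 * (((n : ℝ) + 1) * (n + 3))⁻¹ := by
        field_simp; ring
      rw [this]
      gcongr
      nlinarith
    simp only [hf', Real.norm_eq_abs]
    rw [e, abs_le]
    constructor <;> linarith
  have hb2 : ∀ (n : ℕ) (y : ℝ), y ∈ Set.Ioo (0 : ℝ) 2 → ‖f'' n y‖ ≤ (((n : ℝ) + 1) ^ 2)⁻¹ := by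
    intro n y hy
    have h0 := hpos n y hy
    have := hy.1
    simp only [hf'', Real.norm_eq_abs]
    rw [abs_of_nonneg (by positivity)]
    gcongr
    linarith
  have h1m : (1 : ℝ) ∈ Set.Ioo (0 : ℝ) 2 := by norm_num
  have hf1 : Summable fun n => f n 1 := by
    have : (fun n => f n 1) = fun _ => 0 := by
      funext n
      simp only [hf]
      rw [show (1 : ℝ) + n + 1 = n + 2 by ring]
      ring
    rw [this]; exact summable_zero
  have hf'1 : Summable fun n => f' n 1 :=
    Summable.of_norm_bounded hs2 (fun n => hb1 n 1 h1m)
  have D1 : ∀ y ∈ Set.Ioo (0 : ℝ) 2, HasDerivAt (fun z => ∑' n, f n z) (∑' n, f' n y) y :=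
    fun y hy => hasDerivAt_tsum_of_isPreconnected hs2 isOpen_Ioo isPreconnected_Ioo hd1 hb1 h1m hf1 hy
  have D2 : ∀ y ∈ Set.Ioo (0 : ℝ) 2, HasDerivAt (fun z => ∑' n, f' n z) (∑' n, f'' n y) y :=
    fun y hy => hasDerivAt_tsum_of_isPreconnected hs isOpen_Ioo isPreconnected_Ioo hd2 hb2 h1m hf'1 hy
  have S1 : ∀ y ∈ Set.Ioo (0 : ℝ) 2, Summable fun n => f n y :=
    fun y hy => summable_of_summable_hasDerivAt_of_isPreconnected hs2 isOpen_Ioo isPreconnected_Ioo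
      hd1 hb1 h1m hf1 hy
  have key : ∀ y ∈ Set.Ioo (0 : ℝ) 2,
      Real.log (Real.Gamma y) = ∑' n, f n y - Real.log y := by
    intro y hy
    have t1 := (S1 y hy).hasSum.tendsto_sum_nat
    have t2 : Tendsto (fun N : ℕ => Real.BohrMollerup.logGammaSeq y N + Real.log y
        + y * (Real.log (N + 1) - Real.log N)) atTop
        (nhds (Real.log (Real.Gamma y) + Real.log y + y * 0)) :=
      ((Real.BohrMollerup.tendsto_log_gamma hy.1).add_const _).add
        (Real.tendsto_log_nat_add_one_sub_log.const_mul y)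
    have e : ∀ N : ℕ, ∑ n ∈ Finset.range N, f n y = Real.BohrMollerup.logGammaSeq y N + Real.log y
        + y * (Real.log (N + 1) - Real.log N) := by
      intro N
      have h : ∀ N : ℕ, ∑ n ∈ Finset.range N, f n y =
          y * Real.log (N + 1) + Real.log (N.factorial)
            - ∑ n ∈ Finset.range N, Real.log (y + (n + 1 : ℕ)) := by
        intro N
        induction N with
        | zero => simp
        | succ N ih =>
          rw [Finset.sum_range_succ, ih, Finset.sum_range_succ, Nat.factorial_succ, Nat.cast_mul,
            Real.log_mul (by positivity) (by positivity)]
          simp only [hf]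
          push_cast
          rw [show (N : ℝ) + 1 + 1 = N + 2 by ring, show y + ((N : ℝ) + 1) = y + N + 1 by ring]
          ring
      rw [h, Real.BohrMollerup.logGammaSeq, Finset.sum_range_succ']
      simp only [Nat.cast_zero, add_zero]
      ring
    have := tendsto_nhds_unique (t1.congr e) t2
    linarith
  have G1 : ∀ y ∈ Set.Ioo (0 : ℝ) 2,
      deriv (fun t => Real.log (Real.Gamma t)) y = ∑' n, f' n y - y⁻¹ := by
    intro y hy
    have hev : (fun t => Real.log (Real.Gamma t)) =ᶠ[nhds y]
        fun t => ∑' n, f n t - Real.log t := by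
      filter_upwards [isOpen_Ioo.mem_nhds hy] with t ht using key t ht
    rw [hev.deriv_eq]
    exact ((D1 y hy).sub (Real.hasDerivAt_log hy.1.ne')).deriv
  have h3m : (1 / 3 : ℝ) ∈ Set.Ioo (0 : ℝ) 2 := by norm_num
  have G2 : trigamma (1 / 3) = ∑' n, f'' n (1 / 3) + 9 := by
    have hev : deriv (fun t => Real.log (Real.Gamma t)) =ᶠ[nhds (1 / 3)]
        fun t => ∑' n, f' n t - t⁻¹ := by
      filter_upwards [isOpen_Ioo.mem_nhds h3m] with t ht using G1 t ht
    rw [trigamma, hev.deriv_eq]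
    refine ((D2 _ h3m).sub (hasDerivAt_inv (by norm_num))).deriv.trans ?_
    norm_num
  have S2 : HasSum (fun n => f'' n (1 / 3)) (∑' n, f'' n (1 / 3)) :=
    (Summable.of_norm_bounded hs (fun n => hb2 n _ h3m)).hasSum
  refine (hasSum_nat_add_iff' 1).1 ?_
  rw [G2]
  convert! S2 using 1
  · funext n
    simp only [hf'']
    push_cast
    rw [one_div]
    congr 2
    ring
  · norm_num

theorem aux_sin (k : ℕ) : Real.sin (2 * π * (1 / 3 : ℝ) * k) =
    Real.sqrt 3 / 2 * (2 * (if k % 3 = 1 then 1 else 0) - 1 + (if k % 3 = 0 then 1 else 0)) := by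
  have hk : (k : ℝ) = 3 * (k / 3 : ℕ) + (k % 3 : ℕ) := by
    exact_mod_cast (Nat.div_add_mod k 3).symm
  have e : 2 * π * (1 / 3 : ℝ) * k = 2 * π * (1 / 3 : ℝ) * (k % 3 : ℕ) + (k / 3 : ℕ) * (2 * π) := by
    rw [hk]
    have h : (3 * (k / 3) + k % 3 : ℕ) = k := Nat.div_add_mod k 3
    ring
  rw [e, Real.sin_add_nat_mul_two_pi]
  have h3 : k % 3 < 3 := Nat.mod_lt _ (by norm_num)
  interval_cases h : k % 3
  · simp
  · rw [show 2 * π * (1 / 3 : ℝ) * (1 : ℕ) = π - π / 3 by push_cast; ring, Real.sin_pi_sub,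
      Real.sin_pi_div_three]
    norm_num
  · rw [show 2 * π * (1 / 3 : ℝ) * (2 : ℕ) = π / 3 + π by push_cast; ring, Real.sin_add_pi,
      Real.sin_pi_div_three]
    norm_num

theorem aux_sinZeta : HurwitzZeta.sinZeta ((1 / 3 : ℝ) : UnitAddCircle) 2 =
    ((Real.sqrt 3 / 2 * (2 * (trigamma (1 / 3) / 9) - π ^ 2 / 6 + π ^ 2 / 6 / 9) : ℝ) : ℂ) := by
  have h1 : HasSum (fun k : ℕ => if k % 3 = 1 then 1 / (k : ℝ) ^ 2 else 0) (trigamma (1 / 3) / 9) := by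
    have hinj : Function.Injective (fun n : ℕ => 3 * n + 1) := by
      intro a b h; simp only at h; omega
    refine (hinj.hasSum_iff ?_).1 ?_
    · intro x hx
      rw [if_neg]
      intro h
      exact hx ⟨x / 3, by simp only; omega⟩
    · convert! aux_trigamma_hasSum.div_const 9 using 1
      funext n
      have : (3 * n + 1) % 3 = 1 := by omega
      simp only [Function.comp, this, if_true]
      push_cast
      field_simp
      ring
  have h0 : HasSum (fun k : ℕ => if k % 3 = 0 then 1 / (k : ℝ) ^ 2 else 0) (π ^ 2 / 6 / 9) := by
    have hinj : Function.Injective (fun n : ℕ => 3 * n) := by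
      intro a b h; simp only at h; omega
    refine (hinj.hasSum_iff ?_).1 ?_
    · intro x hx
      rw [if_neg]
      intro h
      exact hx ⟨x / 3, by simp only; omega⟩
    · convert! hasSum_zeta_two.div_const 9 using 1
      funext n
      have : (3 * n) % 3 = 0 := by omega
      simp only [Function.comp, this, if_true]
      push_cast
      rw [mul_pow, div_div]
      ring
  have h := (((h1.mul_left 2).sub hasSum_zeta_two).add h0).mul_left (Real.sqrt 3 / 2)
  have h' := Complex.hasSum_ofReal.2 h
  refine (HurwitzZeta.hasSum_nat_sinZeta (1 / 3) (s := 2) (by norm_num)).unique ?_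
  convert h' using 1
  funext k
  rw [aux_sin]
  rw [show (2 : ℂ) = ((2 : ℕ) : ℂ) by norm_num, Complex.cpow_natCast]
  rw [← Complex.ofReal_natCast k, ← Complex.ofReal_pow, ← Complex.ofReal_div]
  congr 1
  split_ifs <;> ring

theorem aux_deriv_odd (a : UnitAddCircle) :
    deriv (HurwitzZeta.hurwitzZetaOdd a) (-1) = HurwitzZeta.sinZeta a 2 / (4 * π) := by
  have hO : HasDerivAt (HurwitzZeta.hurwitzZetaOdd a)
      (deriv (HurwitzZeta.hurwitzZetaOdd a) (-1)) (1 - 2) := by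
    have := (HurwitzZeta.differentiable_hurwitzZetaOdd a (-1)).hasDerivAt
    rwa [show (1 - 2 : ℂ) = -1 by norm_num]
  have hL : HasDerivAt (fun s : ℂ => HurwitzZeta.hurwitzZetaOdd a (1 - s))
      (deriv (HurwitzZeta.hurwitzZetaOdd a) (-1) * (-1)) 2 :=
    hO.comp (2 : ℂ) ((hasDerivAt_id (2 : ℂ)).const_sub 1)
  set g : ℂ → ℂ := fun s => 2 * (2 * π) ^ (-s) * Complex.Gamma s * HurwitzZeta.sinZeta a s with hg
  have hgd : DifferentiableAt ℂ g 2 := by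
    have hG : DifferentiableAt ℂ Complex.Gamma 2 := by
      apply Complex.differentiableAt_Gamma
      intro m h
      have := congrArg Complex.re h
      simp at this
      have hm : (0 : ℝ) ≤ m := m.cast_nonneg
      linarith
    have hS : DifferentiableAt ℂ (HurwitzZeta.sinZeta a) 2 := HurwitzZeta.differentiableAt_sinZeta a 2
    have hp : DifferentiableAt ℂ (fun s : ℂ => (2 * π : ℂ) ^ (-s)) 2 := by
      refine (differentiableAt_id.neg).const_cpow (Or.inl ?_)
      simp [Real.pi_ne_zero]
    exact ((hp.const_mul 2).mul hG).mul hS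
  have hsin : HasDerivAt (fun s : ℂ => Complex.sin (π * s / 2))
      (Complex.cos (π * 2 / 2) * (π * 1 / 2)) 2 := by
    exact (Complex.hasDerivAt_sin _).comp (2 : ℂ) (((hasDerivAt_id (2 : ℂ)).const_mul (π : ℂ)).div_const 2)
  have hR := hsin.mul hgd.hasDerivAt
  have hev : (fun s : ℂ => HurwitzZeta.hurwitzZetaOdd a (1 - s)) =ᶠ[nhds 2]
      ((fun s : ℂ => Complex.sin (π * s / 2)) * g) := by
    have : {s : ℂ | 0 < s.re} ∈ nhds (2 : ℂ) :=
      (isOpen_lt continuous_const Complex.continuous_re).mem_nhds (by simp)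
    filter_upwards [this] with s hs
    rw [HurwitzZeta.hurwitzZetaOdd_one_sub a]
    · simp only [hg, Pi.mul_apply]
      ring
    · intro n h
      have h2 : 0 < s.re := hs
      rw [h] at h2
      simp at h2
      have hm : (0 : ℝ) ≤ n := n.cast_nonneg
      linarith
  have hE := hL.unique (hR.congr_of_eventuallyEq hev)
  have e1 : (π : ℂ) * 2 / 2 = π := by ring
  have hG2 : Complex.Gamma 2 = 1 := by
    have := Complex.Gamma_nat_eq_factorial 1
    rw [show ((1 : ℕ) : ℂ) + 1 = 2 by norm_num] at this
    rw [this]; simp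
  have hp2 : (2 * π : ℂ) ^ (-2 : ℂ) = ((2 * π : ℂ) ^ 2)⁻¹ := by
    rw [Complex.cpow_neg]
    norm_num
  rw [e1, Complex.cos_pi, Complex.sin_pi] at hE
  simp only [hg, hG2, hp2] at hE
  have hpi : (π : ℂ) ≠ 0 := by exact_mod_cast Real.pi_ne_zero
  field_simp at hE ⊢
  linear_combination (-1) * hE

theorem aux_D : hurwitzZetaDerivNegOne (1 / 3) - hurwitzZetaDerivNegOne (2 / 3) =
    HurwitzZeta.sinZeta ((1 / 3 : ℝ) : UnitAddCircle) 2 / (2 * π) := by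
  have c1 : ⌈(1 / 3 : ℝ)⌉₊ = 1 := by rw [Nat.ceil_eq_iff] <;> norm_num
  have c2 : ⌈(2 / 3 : ℝ)⌉₊ = 1 := by rw [Nat.ceil_eq_iff] <;> norm_num
  have e1 : (fun s => hurwitzZetaReal s (1 / 3)) =
      HurwitzZeta.hurwitzZeta ((1 / 3 : ℝ) : UnitAddCircle) := by
    funext s; simp only [hurwitzZetaReal, c1]; simp
  have e2 : (fun s => hurwitzZetaReal s (2 / 3)) =
      HurwitzZeta.hurwitzZeta ((2 / 3 : ℝ) : UnitAddCircle) := by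
    funext s; simp only [hurwitzZetaReal, c2]; simp
  have ha : ((2 / 3 : ℝ) : UnitAddCircle) = -((1 / 3 : ℝ) : UnitAddCircle) := by
    rw [eq_neg_iff_add_eq_zero, ← AddCircle.coe_add]
    norm_num
  have hne : (-1 : ℂ) ≠ 1 := by norm_num
  rw [hurwitzZetaDerivNegOne, hurwitzZetaDerivNegOne, e1, e2, ← deriv_sub
    (HurwitzZeta.differentiableAt_hurwitzZeta _ hne) (HurwitzZeta.differentiableAt_hurwitzZeta _ hne)]
  have e3 : HurwitzZeta.hurwitzZeta ((1 / 3 : ℝ) : UnitAddCircle) -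
      HurwitzZeta.hurwitzZeta ((2 / 3 : ℝ) : UnitAddCircle) =
      fun s => 2 * HurwitzZeta.hurwitzZetaOdd ((1 / 3 : ℝ) : UnitAddCircle) s := by
    funext s
    rw [ha]
    simp only [Pi.sub_apply, HurwitzZeta.hurwitzZeta, HurwitzZeta.hurwitzZetaEven_neg,
      HurwitzZeta.hurwitzZetaOdd_neg]
    ring
  rw [e3, deriv_const_mul _ (HurwitzZeta.differentiable_hurwitzZetaOdd _ _), aux_deriv_odd]
  ring

/-- Closed form for G(1/3)/G(2/3). -/
theorem barnesG_one_third_div_two_thirds :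
    barnesG (1 / 3) / barnesG (2 / 3) =
      (((2 * π) ^ ((1 : ℝ) / 3) / (3 ^ ((1 : ℝ) / 6) * Real.Gamma (1 / 3))
        * Real.exp ((2 * π ^ 2 - 3 * trigamma (1 / 3)) / (18 * π * Real.sqrt 3)) : ℝ) : ℂ) := by
  have hG1 : 0 < Real.Gamma (1 / 3) := Real.Gamma_pos_of_pos (by norm_num)
  have hG2 : 0 < Real.Gamma (2 / 3) := Real.Gamma_pos_of_pos (by norm_num)
  have h3 : 0 < Real.sqrt 3 := by positivity
  have hsq : Real.sqrt 3 ^ 2 = 3 := Real.sq_sqrt (by norm_num)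
  have hrefl : Real.Gamma (1 / 3) * Real.Gamma (2 / 3) = 2 * π / Real.sqrt 3 := by
    have := Real.Gamma_mul_Gamma_one_sub (1 / 3)
    rw [show (1 : ℝ) - 1 / 3 = 2 / 3 by norm_num, show π * (1 / 3) = π / 3 by ring,
      Real.sin_pi_div_three] at this
    rw [this]
    field_simp
  have hlog : Real.log (Real.Gamma (2 / 3)) =
      Real.log (2 * π) - Real.log 3 / 2 - Real.log (Real.Gamma (1 / 3)) := by
    have := congrArg Real.log hrefl
    rw [Real.log_mul hG1.ne' hG2.ne', Real.log_div (by positivity) h3.ne',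
      Real.log_sqrt (by norm_num)] at this
    linarith
  have hD := aux_D
  rw [aux_sinZeta] at hD
  set T := trigamma (1 / 3)
  set R : ℝ := (2 * π ^ 2 - 3 * T) / (18 * π * Real.sqrt 3) with hR
  have hRD : (Real.sqrt 3 / 2 * (2 * (T / 9) - π ^ 2 / 6 + π ^ 2 / 6 / 9)) / (2 * π) = - R := by
    rw [hR]
    have := Real.pi_pos
    field_simp
    rw [hsq]
    ring
  have hD' : hurwitzZetaDerivNegOne (1 / 3) - hurwitzZetaDerivNegOne (2 / 3) = ((-R : ℝ) : ℂ) := by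
    rw [hD, ← hRD]; push_cast; ring
  have hL : logBarnesG (1 / 3) - logBarnesG (2 / 3) =
      ((Real.log (2 * π) * (1 / 3) - Real.log 3 * (1 / 6) - Real.log (Real.Gamma (1 / 3)) + R : ℝ) : ℂ) := by
    rw [logBarnesG, logBarnesG, if_pos (by norm_num), if_pos (by norm_num), logBarnesG1p,
      logBarnesG1p, hlog]
    push_cast at hD' ⊢
    linear_combination (-1) * hD'
  rw [barnesG, barnesG, ← Complex.exp_sub, hL, ← Complex.ofReal_exp]
  congr 1
  rw [Real.exp_add, Real.exp_sub, Real.exp_sub, Real.exp_log hG1,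
    ← Real.rpow_def_of_pos (by positivity), ← Real.rpow_def_of_pos (by norm_num), div_div]
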